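/- arXiv:2012.08873 — 3 statements merged into one kernel-verified Lean document; each statement's English description precedes it below -/
import Mathlib

section
/- Let g_1,…,g_m ∈ ℝ[x] with g_m = R − ‖x‖₂² for some R > 0, and let f ∈ ℝ[x]. Then for every integer k ≥ max{⌈f⌉, ⌈g_1⌉,…,⌈g_m⌉} there exist a real ξ and symmetric positive definite matrices G_0 (indexed by ℕ^n_k) and G_i (indexed by ℕ^n_{k-⌈g_i⌉}), i ∈ {1,…,m}, such that f − ξ = v_k^T G_0 v_k + Σ_{i=1}^m g_i · v_{k-⌈g_i⌉}^T G_i v_{k-⌈g_i⌉} holds in ℝ[x]. (That is, the SOS relaxation of order k admits a strictly feasible solution, i.e. Slater's condition holds.) -/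
open MvPolynomial

/-- `⌈p⌉ := ⌈deg(p)/2⌉`. -/
noncomputable def halfCeil {n : ℕ} (p : MvPolynomial (Fin n) ℝ) : ℕ :=
  (p.totalDegree + 1) / 2

/-- The finite set `ℕ^n_d` of multi-indices `α ∈ ℕ^n` with `|α| ≤ d`. -/
noncomputable def degLE (n d : ℕ) : Finset (Fin n →₀ ℕ) :=
  (Finset.Iic (Finsupp.equivFunOnFinite.symm fun _ : Fin n => d)).filter
    fun α => (∑ i, α i) ≤ d

/-- The polynomial `v_d^T G v_d = Σ_{α,β ∈ ℕ^n_d} G_{α,β} x^{α+β}` associated with a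
matrix `G` indexed by `ℕ^n_d`. -/
noncomputable def quadForm (n d : ℕ)
    (G : Matrix ↥(degLE n d) ↥(degLE n d) ℝ) : MvPolynomial (Fin n) ℝ :=
  ∑ α : ↥(degLE n d), ∑ β : ↥(degLE n d), monomial (α.1 + β.1) (G α β)

/-- The moment matrix `M_d(y)`, with entries `(M_d(y))_{α,β} = y_{α+β}`. -/
noncomputable def momentMat (n d : ℕ) (y : (Fin n →₀ ℕ) → ℝ) :
    Matrix ↥(degLE n d) ↥(degLE n d) ℝ :=
  Matrix.of fun α β => y (α.1 + β.1)

/-- The localizing matrix `M_d(q·y)`, with entries `Σ_γ q_γ y_{α+β+γ}`. -/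
noncomputable def locMat (n d : ℕ) (q : MvPolynomial (Fin n) ℝ)
    (y : (Fin n →₀ ℕ) → ℝ) : Matrix ↥(degLE n d) ↥(degLE n d) ℝ :=
  Matrix.of fun α β => ∑ γ ∈ q.support, coeff γ q * y (α.1 + β.1 + γ)


lemma mem_degLE_iff {n d : ℕ} (α : Fin n →₀ ℕ) : α ∈ degLE n d ↔ α.degree ≤ d := by
  rw [Finsupp.degree_eq_sum]
  unfold degLE
  simp only [Finset.mem_filter, Finset.mem_Iic, and_iff_right_iff_imp]
  intro h i
  simp only [Finsupp.equivFunOnFinite_symm_apply_apply]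
  exact le_trans (Finset.single_le_sum (f := fun i => α i) (fun _ _ => Nat.zero_le _)
    (Finset.mem_univ i)) h

lemma quadForm_add {n d : ℕ} (A B : Matrix ↥(degLE n d) ↥(degLE n d) ℝ) :
    quadForm n d (A + B) = quadForm n d A + quadForm n d B := by
  simp [quadForm, Finset.sum_add_distrib]

lemma quadForm_smul {n d : ℕ} (c : ℝ) (A : Matrix ↥(degLE n d) ↥(degLE n d) ℝ) :
    quadForm n d (c • A) = c • quadForm n d A := by
  simp [quadForm, Finset.smul_sum, smul_monomial]

lemma quadForm_transpose {n d : ℕ} (A : Matrix ↥(degLE n d) ↥(degLE n d) ℝ) :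
    quadForm n d A.transpose = quadForm n d A := by
  unfold quadForm
  rw [Finset.sum_comm]
  simp [add_comm]

lemma quadForm_diagonal {n d : ℕ} (c : (Fin n →₀ ℕ) → ℝ) :
    quadForm n d (Matrix.diagonal fun α => c α.1)
      = ∑ α ∈ degLE n d, monomial (α + α) (c α) := by
  unfold quadForm
  rw [← Finset.sum_coe_sort (degLE n d)]
  refine Finset.sum_congr rfl fun α _ => ?_
  rw [Finset.sum_eq_single α]
  · simp
  · intro b _ hb
    simp [Matrix.diagonal_apply_ne _ hb.symm]
  · simp

lemma totalDegree_quadForm {n d : ℕ} (A : Matrix ↥(degLE n d) ↥(degLE n d) ℝ) :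
    (quadForm n d A).totalDegree ≤ 2 * d := by
  unfold quadForm
  refine totalDegree_finsetSum_le fun α _ => totalDegree_finsetSum_le fun β _ => ?_
  refine (totalDegree_monomial_le _ _).trans ?_
  have h1 := (mem_degLE_iff _).1 α.2
  have h2 := (mem_degLE_iff _).1 β.2
  change (α.1 + β.1).degree ≤ _
  rw [map_add]; omega

lemma exists_gram {n k : ℕ} (h : MvPolynomial (Fin n) ℝ) (hd : h.totalDegree ≤ 2 * k) :
    ∃ H : Matrix ↥(degLE n k) ↥(degLE n k) ℝ, quadForm n k H = h := by
  have key : ∀ γ ∈ h.support, ∃ H : Matrix ↥(degLE n k) ↥(degLE n k) ℝ,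
      quadForm n k H = monomial γ (coeff γ h) := by
    intro γ hγ
    have hg : γ.degree ≤ 2 * k := le_trans (le_totalDegree hγ) hd
    obtain ⟨α, hα, hα2⟩ : ∃ α ≤ γ, α.degree = min k γ.degree :=
      Finsupp.exists_le_degree_eq _ _ (min_le_right _ _)
    obtain ⟨β, rfl⟩ := exists_add_of_le hα
    rw [map_add] at hg hα2
    have ha : α ∈ degLE n k := (mem_degLE_iff _).2 (by omega)
    have hb : β ∈ degLE n k := (mem_degLE_iff _).2 (by omega)
    refine ⟨Matrix.single ⟨α, ha⟩ ⟨β, hb⟩ (coeff (α + β) h), ?_⟩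
    unfold quadForm
    rw [Finset.sum_eq_single ⟨α, ha⟩, Finset.sum_eq_single ⟨β, hb⟩]
    · simp
    · intro b _ hb
      simp [Matrix.single_apply, hb.symm]
    · simp
    · intro b _ hb
      simp [Matrix.single_apply, hb.symm]
    · simp
  choose! F hF using key
  refine ⟨∑ γ ∈ h.support, F γ, ?_⟩
  conv_rhs => rw [h.as_sum]
  rw [← Finset.sum_congr rfl hF]
  have hz : quadForm n k (0 : Matrix ↥(degLE n k) ↥(degLE n k) ℝ) = 0 := by simp [quadForm]
  exact map_sum (⟨⟨quadForm n k, hz⟩, quadForm_add⟩ : Matrix ↥(degLE n k) ↥(degLE n k) ℝ →+ _)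
    F h.support

lemma exists_posDef {ι : Type*} [Fintype ι] [DecidableEq ι] (H : Matrix ι ι ℝ)
    (hH : H.transpose = H) :
    ∃ N : ℝ, 0 < N ∧ ∀ c : ι → ℝ, (∀ i, N ≤ c i) → (H + Matrix.diagonal c).PosDef := by
  set M : ℝ := ∑ i, ∑ j, |H i j| with hM
  have hM0 : 0 ≤ M := by positivity
  have hle : ∀ i j, |H i j| ≤ M := fun i j =>
    (Finset.single_le_sum (f := fun j => |H i j|) (fun _ _ => abs_nonneg _)
      (Finset.mem_univ j)).trans
    (Finset.single_le_sum (f := fun i => ∑ j, |H i j|)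
      (fun _ _ => Finset.sum_nonneg fun _ _ => abs_nonneg _) (Finset.mem_univ i))
  refine ⟨M * Fintype.card ι + 1, by positivity, fun c hc => ?_⟩
  refine Matrix.PosDef.of_dotProduct_mulVec_pos ?_ ?_
  · rw [Matrix.IsHermitian, Matrix.conjTranspose_eq_transpose_of_trivial]
    simp [hH]
  · intro x hx
    have hpos : 0 < ∑ i, x i ^ 2 := by
      obtain ⟨i, hi⟩ := Function.ne_iff.1 hx
      exact Finset.sum_pos' (fun _ _ => sq_nonneg _) ⟨i, Finset.mem_univ _, by
        have : x i ≠ 0 := hi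
        positivity⟩
    have e1 : star x ⬝ᵥ (H + Matrix.diagonal c).mulVec x
        = (∑ i, ∑ j, H i j * x i * x j) + ∑ i, c i * x i ^ 2 := by
      rw [Matrix.add_mulVec, dotProduct_add]
      congr 1
      · simp only [dotProduct, Matrix.mulVec, Finset.mul_sum]
        refine Finset.sum_congr rfl fun i _ => Finset.sum_congr rfl fun j _ => ?_
        simp; ring
      · simp only [dotProduct, Matrix.mulVec_diagonal]
        refine Finset.sum_congr rfl fun i _ => ?_
        simp; ring
    rw [e1]
    have e2 : ∑ i, ∑ j, (-(M * (x i ^ 2 + x j ^ 2) / 2)) ≤ ∑ i, ∑ j, H i j * x i * x j := by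
      refine Finset.sum_le_sum fun i _ => Finset.sum_le_sum fun j _ => ?_
      have h1 : |H i j * x i * x j| ≤ M * (x i ^ 2 + x j ^ 2) / 2 := by
        rw [mul_assoc, abs_mul]
        have : |x i * x j| ≤ (x i ^ 2 + x j ^ 2) / 2 := by
          rw [abs_le]; constructor <;> nlinarith [sq_nonneg (x i - x j), sq_nonneg (x i + x j)]
        calc _ ≤ M * ((x i ^ 2 + x j ^ 2) / 2) :=
              mul_le_mul (hle i j) this (abs_nonneg _) hM0
          _ = _ := by ring
      exact (abs_le.1 h1).1
    have e3 : ∑ i, ∑ j, (-(M * (x i ^ 2 + x j ^ 2) / 2))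
        = - (M * Fintype.card ι * ∑ i, x i ^ 2) := by
      have : ∀ i j, (-(M * (x i ^ 2 + x j ^ 2) / 2)) = (-(M/2)) * x i ^ 2 + (-(M/2)) * x j ^ 2 := by
        intros; ring
      simp only [this, Finset.sum_add_distrib, ← Finset.mul_sum, Finset.sum_const,
        Finset.card_univ, nsmul_eq_mul]
      ring
    have e4 : (M * Fintype.card ι + 1) * ∑ i, x i ^ 2 ≤ ∑ i, c i * x i ^ 2 := by
      rw [Finset.mul_sum]
      exact Finset.sum_le_sum fun i _ => mul_le_mul_of_nonneg_right (hc i) (sq_nonneg _)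
    nlinarith

lemma halfCeil_ball {n : ℕ} (hn : 0 < n) (R : ℝ) :
    halfCeil (C R - ∑ i, X i ^ 2 : MvPolynomial (Fin n) ℝ) = 1 := by
  have h1 : (C R - ∑ i, X i ^ 2 : MvPolynomial (Fin n) ℝ).totalDegree ≤ 2 := by
    refine (totalDegree_sub _ _).trans ?_
    simp only [totalDegree_C, zero_le, sup_of_le_right]
    refine totalDegree_finsetSum_le fun i _ => ?_
    simp
  have h2 : 2 ≤ (C R - ∑ i, X i ^ 2 : MvPolynomial (Fin n) ℝ).totalDegree := by
    have := le_totalDegree (p := (C R - ∑ i, X i ^ 2 : MvPolynomial (Fin n) ℝ))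
      (s := Finsupp.single ⟨0, hn⟩ 2) (by
        rw [mem_support_iff, coeff_sub, coeff_sum, coeff_C,
          if_neg (by intro h; simpa using (DFunLike.congr_fun h ⟨0, hn⟩))]
        simp only [coeff_X_pow]
        rw [Finset.sum_eq_single ⟨0, hn⟩]
        · simp
        · intro b _ hb
          rw [if_neg]
          intro h
          have := DFunLike.congr_fun h b
          simp [Finsupp.single_apply, hb.symm] at this
        · simp)
    simpa using this
  unfold halfCeil
  omega

/-- Multiplying the ball constraint by a diagonal SOS gives a diagonal form. -/
lemma ballDiag_mul {n s k : ℕ} (hk : s + 1 = k) (R : ℝ) (hR : 0 < R) (N : ℝ) (hN : 0 < N) :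
    ∃ d : (Fin n →₀ ℕ) → ℝ, (∀ α, 0 < d α) ∧ ∃ c : (Fin n →₀ ℕ) → ℝ,
      (∀ β ∈ degLE n k, β ≠ 0 → N ≤ c β) ∧
      (C R - ∑ i, X i ^ 2) * (∑ α ∈ degLE n s, monomial (α + α) (d α))
        = - ∑ β ∈ degLE n k, monomial (β + β) (c β) := by
  set d : (Fin n →₀ ℕ) → ℝ := fun α => N * (1 + R) ^ (k - α.degree) with hd
  have hdpos : ∀ α, 0 < d α := fun α => by positivity
  refine ⟨d, hdpos, fun β =>
    (∑ i, ∑ α ∈ degLE n s, if α + Finsupp.single i 1 = β then d α else 0)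
      - (if β ∈ degLE n s then R * d β else 0), ?_, ?_⟩
  · intro β hβ hβ0
    rw [mem_degLE_iff] at hβ
    obtain ⟨i, hi⟩ := Finsupp.ne_iff.1 hβ0
    have hi' : Finsupp.single i 1 ≤ β := by
      rw [Finsupp.single_le_iff]; exact Nat.one_le_iff_ne_zero.2 hi
    obtain ⟨α, rfl⟩ := exists_add_of_le hi'
    rw [add_comm _ α] at hβ ⊢
    have hdeg : (α + Finsupp.single i 1).degree = α.degree + 1 := by simp
    have hα : α ∈ degLE n s := (mem_degLE_iff _).2 (by omega)
    have b1 : d α ≤ ∑ j, ∑ α' ∈ degLE n s,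
        if α' + Finsupp.single j 1 = α + Finsupp.single i 1 then d α' else 0 := by
      have nn : ∀ j, ∀ α', 0 ≤ if α' + Finsupp.single j 1 = α + Finsupp.single i 1
          then d α' else 0 := fun j α' => by
        split_ifs
        · exact (hdpos _).le
        · exact le_rfl
      refine le_trans ?_ (Finset.single_le_sum (f := fun j => ∑ α' ∈ degLE n s,
        if α' + Finsupp.single j 1 = α + Finsupp.single i 1 then d α' else 0)
        (fun j _ => Finset.sum_nonneg fun α' _ => nn j α') (Finset.mem_univ i))
      refine le_trans ?_ (Finset.single_le_sum (f := fun α' =>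
        if α' + Finsupp.single i 1 = α + Finsupp.single i 1 then d α' else 0)
        (fun α' _ => nn i α') hα)
      simp
    have b2 : (if α + Finsupp.single i 1 ∈ degLE n s then R * d (α + Finsupp.single i 1) else 0)
        ≤ R * d (α + Finsupp.single i 1) := by
      have := mul_pos hR (hdpos (α + Finsupp.single i 1))
      split_ifs
      · exact le_rfl
      · exact this.le
    have b3 : N ≤ d α - R * d (α + Finsupp.single i 1) := by
      simp only [hd, hdeg]
      obtain ⟨t, ht⟩ : ∃ t, k - α.degree = t + 1 := ⟨k - α.degree - 1, by omega⟩
      have ht2 : k - (α.degree + 1) = t := by omega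
      rw [ht, ht2, pow_succ]
      have : (1:ℝ) ≤ (1 + R) ^ t := one_le_pow₀ (by linarith)
      nlinarith
    linarith
  · have x1 : ∑ β ∈ degLE n k, monomial (β + β) (∑ i, ∑ α ∈ degLE n s,
          if α + Finsupp.single i 1 = β then d α else 0)
        = (∑ i, X i ^ 2) * ∑ α ∈ degLE n s, monomial (α + α) (d α) := by
      simp only [map_sum]
      rw [Finset.sum_comm, Finset.sum_mul]
      refine Finset.sum_congr rfl fun i _ => ?_
      rw [Finset.sum_comm, Finset.mul_sum]
      refine Finset.sum_congr rfl fun α hα => ?_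
      rw [mem_degLE_iff] at hα
      rw [Finset.sum_eq_single (α + Finsupp.single i 1)]
      · rw [if_pos rfl, X_pow_eq_monomial, monomial_mul, one_mul]
        congr 1
        rw [show (2:ℕ) = 1 + 1 from rfl, Finsupp.single_add]
        abel_nf
      · intro b _ hb
        rw [if_neg hb.symm, map_zero]
      · intro h
        exact absurd ((mem_degLE_iff _).2 (by simp; omega)) h
    have x2 : ∑ β ∈ degLE n k, monomial (β + β) (if β ∈ degLE n s then R * d β else 0)
        = C R * ∑ α ∈ degLE n s, monomial (α + α) (d α) := by
      rw [Finset.mul_sum]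
      simp only [C_mul_monomial]
      symm
      refine Finset.sum_subset_zero_on_sdiff ?_ ?_ ?_
      · intro a ha
        rw [mem_degLE_iff] at *
        omega
      · intro a ha
        rw [if_neg (Finset.mem_sdiff.1 ha).2, map_zero]
      · intro a ha
        rw [if_pos ha]
    simp only [map_sub, Finset.sum_sub_distrib]
    rw [x1, x2]
    ring

/-- If a ball constraint `g_m = R − ‖x‖₂²` (`R > 0`) is present, then for every
`k ≥ max{⌈f⌉, ⌈g_i⌉}` there exist `ξ ∈ ℝ` and symmetric positive definite matrices `G_0`
(indexed by `ℕ^n_k`) and `G_i` (indexed by `ℕ^n_{k-⌈g_i⌉}`) with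
`f − ξ = v_k^T G_0 v_k + Σ_i g_i · v_{k-⌈g_i⌉}^T G_i v_{k-⌈g_i⌉}`, i.e. the order-`k` SOS
relaxation has a strictly feasible solution (Slater's condition). -/
theorem stmt4 (n m : ℕ) (g : Fin (m + 1) → MvPolynomial (Fin n) ℝ) (R : ℝ) (hR : 0 < R)
    (hball : g (Fin.last m) = C R - ∑ i, X i ^ 2)
    (f : MvPolynomial (Fin n) ℝ) :
    ∀ k : ℕ, halfCeil f ≤ k → (∀ i, halfCeil (g i) ≤ k) →
      ∃ ξ : ℝ,
      ∃ G0 : Matrix ↥(degLE n k) ↥(degLE n k) ℝ, G0.PosDef ∧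
      ∃ G : ∀ i : Fin (m + 1),
          Matrix ↥(degLE n (k - halfCeil (g i))) ↥(degLE n (k - halfCeil (g i))) ℝ,
        (∀ i, (G i).PosDef) ∧
        f - C ξ
          = quadForm n k G0 + ∑ i, g i * quadForm n (k - halfCeil (g i)) (G i) := by

  classical
  intro k hf hg
  rcases Nat.eq_zero_or_pos n with rfl | hn
  · set r := quadForm 0 k 1 + ∑ i, g i * quadForm 0 (k - halfCeil (g i)) 1 with hr
    refine ⟨coeff 0 (f - r), 1, Matrix.PosDef.one, fun _ => 1, fun _ => Matrix.PosDef.one, ?_⟩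
    rw [← hr, ← eq_C_of_isEmpty (f - r)]
    ring
  have hb1 : halfCeil (g (Fin.last m)) = 1 := by rw [hball]; exact halfCeil_ball hn R
  have hk : (k - halfCeil (g (Fin.last m))) + 1 = k := by
    have := hg (Fin.last m)
    omega
  set h : MvPolynomial (Fin n) ℝ := f - ∑ i : Fin m, g i.castSucc *
    quadForm n (k - halfCeil (g i.castSucc)) 1 with hh
  have hdeg : h.totalDegree ≤ 2 * k := by
    refine (totalDegree_sub _ _).trans (max_le ?_ ?_)
    · unfold halfCeil at hf; omega
    · refine totalDegree_finsetSum_le fun i _ => (totalDegree_mul _ _).trans ?_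
      have h1 := totalDegree_quadForm (n := n) (d := k - halfCeil (g i.castSucc)) 1
      have h2 := hg i.castSucc
      have h3 : (g i.castSucc).totalDegree ≤ 2 * halfCeil (g i.castSucc) := by
        unfold halfCeil; omega
      omega
  obtain ⟨H0, hH0⟩ := exists_gram h hdeg
  obtain ⟨H, hH, hHs⟩ : ∃ H, quadForm n k H = h ∧ H.transpose = H := by
    refine ⟨(1/2 : ℝ) • (H0 + H0.transpose), ?_, ?_⟩
    · rw [quadForm_smul, quadForm_add, quadForm_transpose, hH0, ← two_smul ℝ h, smul_smul]
      norm_num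
    · simp [add_comm]
  obtain ⟨N, hN, hPD⟩ := exists_posDef H hHs
  obtain ⟨d, hd, c, hc, hdc⟩ := ballDiag_mul (n := n) hk R hR N hN
  refine ⟨c 0 - N, H + Matrix.diagonal (fun α => Function.update c 0 N α.1), hPD _ ?_,
    fun i => Matrix.diagonal (fun α => if i = Fin.last m then d α.1 else 1), ?_, ?_⟩
  · intro α
    by_cases h0 : α.1 = 0
    · simp [h0]
    · rw [Function.update_of_ne h0]
      exact hc _ α.2 h0
  · intro i
    refine Matrix.PosDef.diagonal fun α => ?_
    split_ifs
    · exact hd _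
    · exact one_pos
  · have hu : ∑ β ∈ degLE n k, monomial (β + β) (Function.update c 0 N β)
        = ∑ β ∈ degLE n k, monomial (β + β) (c β) + C (N - c 0) := by
      have h0 : (0 : Fin n →₀ ℕ) ∈ degLE n k := (mem_degLE_iff _).2 (by simp)
      rw [← Finset.add_sum_erase _ _ h0, ← Finset.add_sum_erase _ (fun β => monomial (β + β) (c β)) h0]
      have : ∑ β ∈ (degLE n k).erase 0, monomial (β + β) (Function.update c 0 N β)
          = ∑ β ∈ (degLE n k).erase 0, monomial (β + β) (c β) :=
        Finset.sum_congr rfl fun β hβ => by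
          rw [Function.update_of_ne (Finset.ne_of_mem_erase hβ)]
      rw [this]
      simp only [Function.update_self, add_zero, C_sub]
      change C N + _ = C (c 0) + _ + _
      ring
    have hl : ∀ i : Fin m, Fin.castSucc i ≠ Fin.last m := fun i => (Fin.castSucc_lt_last i).ne
    rw [Fin.sum_univ_castSucc, quadForm_add, quadForm_diagonal, hu, hH]
    simp only [hl, if_true, if_false, Matrix.diagonal_one]
    rw [quadForm_diagonal, hball] 
    rw [hball] at hdc
    rw [hdc, hh]
    simp only [C_sub]
    ring
end

section
/- Let g_1,…,g_m, h_1,…,h_l ∈ ℝ[x], R > 0 with S(g) ∩ V(h) given by S(g) := {x : g_i(x) ≥ 0 ∀i} satisfying S(g) ⊆ {x : ‖x‖₂² ≤ R}. Set u := max_i ⌈g_i⌉, g̃_i := g_i·(1+‖x‖₂²)^{u-⌈g_i⌉} for i ∈ {1,…,m}, let L > 0 satisfy Σ_{i=1}^m g̃_i(x) ≤ L for all x ∈ S(g), and set g̃_{m+1} := L − Σ_{i=1}^m g̃_i and g̃_{m+2} := R − ‖x‖₂². Then: (a) {x ∈ ℝⁿ : g_i(x) ≥ 0 ∀i ≤ m,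 g̃_{m+1}(x) ≥ 0, g̃_{m+2}(x) ≥ 0} = S(g); and (b) for every integer k ≥ max{⌈g_i⌉ (i ≤ m+2), ⌈h_j⌉} there exist ξ > 0, diagonal matrices G_0 (indexed by ℕ^n_k), G_i (indexed by ℕ^n_{k-⌈g_i⌉}, i ≤ m), G_{m+1} (indexed by ℕ^n_{k-u}), G_{m+2} (indexed by ℕ^n_{k-1}), all with diagonal entries ≥ 1, and polynomials ψ_j of degree ≤ 2(k−⌈h_j⌉), such that ξ = v_k^T G_0 v_k + Σ_{i=1}^m g_i · v_{k-⌈g_i⌉}^T G_i v_{k-⌈g_i⌉} + g̃_{m+1}· v_{k-u}^T G_{m+1} v_{k-u} + g̃_{m+2}· v_{k-1}^T G_{m+2} v_{k-1} + Σ_{j=1}^l h_j ψ_j holds in ℝ[x]. -/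
open MvPolynomial

/-- A (diagonal) matrix all of whose off-diagonal entries vanish and whose diagonal entries
are all ≥ 1. -/
def DiagGE1 {ι : Type*} (M : Matrix ι ι ℝ) : Prop :=
  (∀ a b, a ≠ b → M a b = 0) ∧ ∀ a, 1 ≤ M a a

noncomputable def tt (n : ℕ) : MvPolynomial (Fin n) ℝ := 1 + ∑ v, X v

lemma tt_succ {n : ℕ} (d : ℕ) (α : Fin n →₀ ℕ) :
    coeff α (tt n ^ (d+1)) = coeff α (tt n ^ d) +
      ∑ v, if v ∈ α.support then coeff (α - Finsupp.single v 1) (tt n ^ d) else 0 := by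
  rw [pow_succ]
  conv_lhs => rw [show tt n = 1 + ∑ v, X v from rfl]
  change coeff α (tt n ^ d * (1 + ∑ v, X v)) = _
  rw [mul_add, mul_one, coeff_add, Finset.mul_sum, coeff_sum]
  simp only [coeff_mul_X']

lemma tt_nonneg {n : ℕ} (d : ℕ) : ∀ (α : Fin n →₀ ℕ), 0 ≤ coeff α (tt n ^ d) := by
  induction d with
  | zero => intro α; rw [pow_zero, coeff_one]; split_ifs <;> norm_num
  | succ d ih =>
    intro α
    rw [tt_succ]
    refine add_nonneg (ih _) (Finset.sum_nonneg fun v _ => ?_)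
    split_ifs
    · exact ih _
    · exact le_rfl

lemma tt_mono {n : ℕ} (α : Fin n →₀ ℕ) : Monotone fun d => coeff α (tt n ^ d) := by
  refine monotone_nat_of_le_succ fun d => ?_
  rw [tt_succ]
  refine le_add_of_nonneg_right (Finset.sum_nonneg fun v _ => ?_)
  split_ifs
  · exact tt_nonneg _ _
  · exact le_rfl

lemma tt_ge {n : ℕ} (d : ℕ) : ∀ (α : Fin n →₀ ℕ), (∑ i, α i) ≤ d →
    1 ≤ coeff α (tt n ^ d) := by
  induction d with
  | zero =>
    intro α h
    have : α = 0 := by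
      ext i
      have := Finset.single_le_sum (f := fun i => α i) (fun i _ => Nat.zero_le _)
        (Finset.mem_univ i)
      simp only [Finsupp.coe_zero, Pi.zero_apply]
      omega
    subst this
    simp
  | succ d ih =>
    intro α h
    by_cases hd : (∑ i, α i) ≤ d
    · exact (ih α hd).trans (tt_mono α (Nat.le_succ d))
    · have : ∃ v, α v ≠ 0 := by
        by_contra hc
        push Not at hc
        simp [hc] at hd
      obtain ⟨v, hv⟩ := this
      rw [tt_succ]
      have h1 : (∑ i, (α - Finsupp.single v 1 : Fin n →₀ ℕ) i) ≤ d := by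
        have e : α = (α - Finsupp.single v 1) + Finsupp.single v 1 := by
          ext i
          by_cases hi : v = i
          · subst hi; simp; omega
          · simp [Finsupp.single_apply, hi]
        have e2 : ∑ i, α i = (∑ i, (α - Finsupp.single v 1 : Fin n →₀ ℕ) i) + 1 := by
          conv_lhs => rw [e]
          simp only [Finsupp.add_apply, Finset.sum_add_distrib]
          congr 1
          simp [Finsupp.single_apply]
        omega
      have h2 := ih _ h1
      have h3 := Finset.single_le_sum
        (f := fun v => if v ∈ α.support then coeff (α - Finsupp.single v 1) (tt n ^ d) else 0)
        (fun v _ => by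
          split_ifs
          · exact tt_nonneg _ _
          · exact le_rfl) (Finset.mem_univ v)
      have hv' : v ∈ α.support := by simpa using hv
      simp only [hv', if_true] at h3
      linarith [tt_nonneg (n := n) d α]

lemma mem_degLE {n d : ℕ} (α : Fin n →₀ ℕ) : α ∈ degLE n d ↔ (∑ i, α i) ≤ d := by
  unfold degLE
  rw [Finset.mem_filter]
  refine ⟨fun h => h.2, fun h => ⟨?_, h⟩⟩
  rw [Finset.mem_Iic]
  intro i
  have := Finset.single_le_sum (f := fun i => α i) (fun i _ => Nat.zero_le _)
        (Finset.mem_univ i)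
  simpa using this.trans h

lemma tt_deg (n d : ℕ) : (tt n ^ d).totalDegree ≤ d := by
  refine (totalDegree_pow _ _).trans ?_
  have : (tt n).totalDegree ≤ 1 := by
    refine (totalDegree_add _ _).trans ?_
    rw [max_le_iff]
    refine ⟨by simp, ?_⟩
    refine totalDegree_finsetSum_le fun i _ => ?_
    simp
  nlinarith

lemma quad_of {n d : ℕ} (q : MvPolynomial (Fin n) ℝ) (hq : q.totalDegree ≤ d)
    (hc : ∀ α : Fin n →₀ ℕ, (∑ i, α i) ≤ d → 1 ≤ coeff α q) :
    ∃ G : Matrix ↥(degLE n d) ↥(degLE n d) ℝ, DiagGE1 G ∧ quadForm n d G = expand 2 q := by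
  classical
  refine ⟨Matrix.diagonal fun α => coeff α.1 q, ⟨fun a b hab => Matrix.diagonal_apply_ne _ hab,
    fun a => ?_⟩, ?_⟩
  · rw [Matrix.diagonal_apply_eq]
    exact hc _ ((mem_degLE _).1 a.2)
  · have hs : q.support ⊆ degLE n d := by
      intro α hα
      rw [mem_degLE]
      have := (le_totalDegree hα).trans hq
      rwa [Finsupp.sum_fintype _ _ (fun _ => rfl)] at this
    have e : q = ∑ α ∈ degLE n d, monomial α (coeff α q) := by
      conv_lhs => rw [q.as_sum]
      refine Finset.sum_subset hs fun α _ hα => ?_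
      rw [notMem_support_iff.1 hα, monomial_zero]
    conv_rhs => rw [e]
    rw [map_sum, ← Finset.sum_coe_sort]
    unfold quadForm
    refine Finset.sum_congr rfl fun α _ => ?_
    rw [Finset.sum_eq_single α]
    · rw [Matrix.diagonal_apply_eq, expand_monomial, two_smul]
    · intro β _ hβ
      rw [Matrix.diagonal_apply_ne _ hβ.symm, monomial_zero]
    · simp

lemma expand_tt (n : ℕ) : expand 2 (tt n) = 1 + ∑ v, X v ^ 2 := by
  simp [tt]

lemma quad_pow (n d : ℕ) :
    ∃ G : Matrix ↥(degLE n d) ↥(degLE n d) ℝ, DiagGE1 G ∧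
      quadForm n d G = (1 + ∑ v, X v ^ 2) ^ d := by
  obtain ⟨G, h1, h2⟩ := quad_of (tt n ^ d) (tt_deg n d) (tt_ge d)
  exact ⟨G, h1, by rw [h2, map_pow, expand_tt]⟩

lemma quad_G0 (n k e : ℕ) (he : e ≤ k) (L : ℝ) (hL : 0 < L) :
    ∃ G : Matrix ↥(degLE n k) ↥(degLE n k) ℝ, DiagGE1 G ∧
      quadForm n k G = C (L + 1) * (1 + ∑ v, X v ^ 2) ^ k - C L * (1 + ∑ v, X v ^ 2) ^ e := by
  obtain ⟨G, h1, h2⟩ := quad_of (d := k) (C (L+1) * tt n ^ k - C L * tt n ^ e) (by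
    refine (totalDegree_sub _ _).trans (max_le ?_ ?_)
    · refine (totalDegree_mul _ _).trans ?_
      rw [totalDegree_C, zero_add]
      exact tt_deg n k
    · refine (totalDegree_mul _ _).trans ?_
      simpa using (tt_deg n e).trans he) (by
    intro α hα
    rw [coeff_sub, coeff_C_mul, coeff_C_mul]
    have h1 := tt_ge k α hα
    have h2 : coeff α (tt n ^ e) ≤ coeff α (tt n ^ k) := tt_mono α he
    nlinarith)
  refine ⟨G, h1, ?_⟩
  rw [h2, map_sub, map_mul, map_mul, map_pow, map_pow, expand_tt, expand_C, expand_C]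

lemma quad_Q (n k : ℕ) (M A : ℝ) (hM : 1 ≤ M) (hA : 1 ≤ A) :
    ∃ G : Matrix ↥(degLE n k) ↥(degLE n k) ℝ, DiagGE1 G ∧
      quadForm n k G * (C M - (1 + ∑ v, X v ^ 2)) =
        C A * (C (M ^ (k+1)) - (1 + ∑ v, X v ^ 2) ^ (k+1)) := by
  obtain ⟨G, h1, h2⟩ := quad_of (d := k)
    (C A * ∑ j ∈ Finset.range (k+1), tt n ^ j * C M ^ (k + 1 - 1 - j)) (by
    refine (totalDegree_mul _ _).trans ?_
    rw [totalDegree_C, zero_add]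
    refine totalDegree_finsetSum_le fun j hj => ?_
    refine (totalDegree_mul _ _).trans ?_
    rw [← C_pow, totalDegree_C, add_zero]
    have := Finset.mem_range.1 hj
    exact (tt_deg n j).trans (by omega)) (by
    intro α hα
    rw [coeff_C_mul, coeff_sum]
    have h3 := Finset.single_le_sum
      (f := fun j => coeff α (tt n ^ j * C M ^ (k + 1 - 1 - j))) (s := Finset.range (k+1))
      (fun j _ => by
        rw [← C_pow, mul_comm, coeff_C_mul]
        exact mul_nonneg (by positivity) (tt_nonneg _ _)) (a := k) (by simp)
    simp only [Nat.add_sub_cancel, Nat.sub_self, pow_zero, mul_one] at h3 ⊢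
    have := tt_ge k α hα
    nlinarith)
  refine ⟨G, h1, ?_⟩
  rw [h2, ← expand_tt]
  have : (C M : MvPolynomial (Fin n) ℝ) = expand 2 (C M) := by rw [expand_C]
  have hh := geom_sum₂_mul (tt n) (C M) (k+1)
  have h5 := congrArg (expand 2) hh
  simp only [map_mul, map_sub, map_pow, expand_C] at h5 ⊢
  linear_combination (-C A) * h5

/-- Let `S(g) ⊆ {‖x‖₂² ≤ R}`, `u := max_i ⌈g_i⌉`,
`g̃_i := g_i (1+‖x‖₂²)^{u-⌈g_i⌉}`, `L > 0` with `Σ_i g̃_i ≤ L` on `S(g)`,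
`g̃_{m+1} := L − Σ_i g̃_i` and `g̃_{m+2} := R − ‖x‖₂²`.  Then (a) adding the two redundant
constraints does not change the feasible set, and (b) the LP (14) for the enlarged family is
feasible at every relaxation order `k`. -/
theorem stmt8 (n m l : ℕ)
    (g : Fin m → MvPolynomial (Fin n) ℝ) (h : Fin l → MvPolynomial (Fin n) ℝ)
    (R : ℝ) (hR : 0 < R)
    (hSball : ∀ x : Fin n → ℝ, (∀ i, 0 ≤ eval x (g i)) → (∑ v, x v ^ 2) ≤ R)
    (u : ℕ) (hu : u = Finset.univ.sup fun i => halfCeil (g i))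
    (gt : Fin m → MvPolynomial (Fin n) ℝ)
    (hgt : ∀ i, gt i = g i * (1 + ∑ v, X v ^ 2) ^ (u - halfCeil (g i)))
    (L : ℝ) (hL : 0 < L)
    (hLbig : ∀ x : Fin n → ℝ, (∀ i, 0 ≤ eval x (g i)) → (∑ i, eval x (gt i)) ≤ L)
    (gm1 gm2 : MvPolynomial (Fin n) ℝ)
    (hgm1 : gm1 = C L - ∑ i, gt i) (hgm2 : gm2 = C R - ∑ v, X v ^ 2) :
    ({x : Fin n → ℝ | (∀ i, 0 ≤ eval x (g i)) ∧ 0 ≤ eval x gm1 ∧ 0 ≤ eval x gm2}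
        = {x : Fin n → ℝ | ∀ i, 0 ≤ eval x (g i)}) ∧
    (∀ k : ℕ, (∀ i, halfCeil (g i) ≤ k) → halfCeil gm1 ≤ k → halfCeil gm2 ≤ k →
      (∀ j, halfCeil (h j) ≤ k) →
      ∃ ξ : ℝ, 0 < ξ ∧
      ∃ G0 : Matrix ↥(degLE n k) ↥(degLE n k) ℝ, DiagGE1 G0 ∧
      ∃ G : ∀ i : Fin m,
          Matrix ↥(degLE n (k - halfCeil (g i))) ↥(degLE n (k - halfCeil (g i))) ℝ,
        (∀ i, DiagGE1 (G i)) ∧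
      ∃ Gm1 : Matrix ↥(degLE n (k - u)) ↥(degLE n (k - u)) ℝ, DiagGE1 Gm1 ∧
      ∃ Gm2 : Matrix ↥(degLE n (k - 1)) ↥(degLE n (k - 1)) ℝ, DiagGE1 Gm2 ∧
      ∃ ψ : Fin l → MvPolynomial (Fin n) ℝ,
        (∀ j, (ψ j).totalDegree ≤ 2 * (k - halfCeil (h j))) ∧
        (C ξ : MvPolynomial (Fin n) ℝ)
          = quadForm n k G0 + (∑ i, g i * quadForm n (k - halfCeil (g i)) (G i))
            + gm1 * quadForm n (k - u) Gm1
            + gm2 * quadForm n (k - 1) Gm2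
            + ∑ j, h j * ψ j) := by
  subst hgm1 hgm2
  constructor
  · ext x
    simp only [Set.mem_setOf_eq]
    refine ⟨fun hx => hx.1, fun hx => ⟨hx, ?_, ?_⟩⟩
    · have := hLbig x hx
      simpa using this
    · have := hSball x hx
      simpa using this
  · intro k hgk _ hg2 _
    have huk : u ≤ k := by
      rw [hu]
      exact Finset.sup_le fun i _ => hgk i
    have hiu : ∀ i, halfCeil (g i) ≤ u := fun i => by
      rw [hu]
      exact Finset.le_sup (f := fun i => halfCeil (g i)) (Finset.mem_univ i)
    choose G hG1 hG2 using fun i => quad_pow n (k - halfCeil (g i))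
    obtain ⟨Gm1, hm1, hm1'⟩ := quad_pow n (k - u)
    have key : (∑ i, g i * quadForm n (k - halfCeil (g i)) (G i))
            + (C L - ∑ i, gt i) * quadForm n (k - u) Gm1
            = C L * (1 + ∑ v, X v ^ 2) ^ (k - u) := by
      have : ∀ i, g i * quadForm n (k - halfCeil (g i)) (G i)
          = gt i * (1 + ∑ v, X v ^ 2) ^ (k - u) := fun i => by
        rw [hG2, hgt, mul_assoc, ← pow_add]
        congr 2
        have := hiu i
        omega
      rw [Finset.sum_congr rfl fun i _ => this i, ← Finset.sum_mul, hm1']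
      ring
    rcases k with _ | k
    · obtain ⟨G0, h0, h0'⟩ := quad_pow n 0
      have hd : (C R - ∑ v, X v ^ 2 : MvPolynomial (Fin n) ℝ).totalDegree = 0 := by
        unfold halfCeil at hg2
        omega
      have hc := totalDegree_eq_zero_iff_eq_C.1 hd
      have hR' : coeff 0 (C R - ∑ v, X v ^ 2 : MvPolynomial (Fin n) ℝ) = R := by
        rw [← constantCoeff_eq]
        simp
      rw [hR'] at hc
      refine ⟨1 + L + R, by positivity, G0, h0, G, hG1, Gm1, hm1, G0, h0, fun _ => 0,
        by simp, ?_⟩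
      rw [hc, add_assoc (quadForm n 0 G0), key]
      simp only [Nat.zero_sub, h0']
      simp
    · obtain ⟨G0, h0, h0'⟩ := quad_G0 n (k+1) (k+1-u) (Nat.sub_le _ _) L hL
      obtain ⟨Q, hQ, hQ'⟩ := quad_Q n k (R+1) (L+1) (by linarith) (by linarith)
      refine ⟨(L+1) * (R+1)^(k+1), by positivity, G0, h0, G, hG1, Gm1, hm1, Q, hQ, fun _ => 0,
        by simp, ?_⟩
      rw [add_assoc (quadForm n (k+1) G0), key, h0']
      simp only [mul_zero, Finset.sum_const_zero, add_zero]
      change quadForm n (k + 1 - 1) Q * _ = _ at hQ'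
      simp only [C_mul, C_add, C_1, C_pow] at hQ' ⊢
      linear_combination (-1 : MvPolynomial (Fin n) ℝ) * hQ'
end

section
/- Let I ⊆ {1,…,n} and let J be a finite index set. Suppose J is partitioned into index sets corresponding to annulus pairs and balls as follows: there are subsets T_q ⊆ I with reals R̄_q > R̲_q > 0 for q in a set A ⊆ J, paired indices q' for q ∈ A, and subsets T_q ⊆ I with reals R̄_q > 0 for q in a set B ⊆ J, with g_q := ‖x(T_q)‖₂² − R̲_q and g_{q'} := R̄_q − ‖x(T_q)‖₂² for q ∈ A, and g_q := R̄_q − ‖x(T_q)‖₂² for q ∈ B, and (∪_{q∈A} T_q) ∪ (∪_{q∈B} T_q) = I. Then for every integer k ≥ 1 there exist a real ξ > 0 and diagonal matrices G_0 (indexed by ℕ^I_k) and G_i (indexed by ℕ^I_{k-1}), i ∈ J, all of whose diagonal entries are ≥ 1, such that ξ = (v_k^I)^T G_0 v_k^I + Σ_{i∈J} g_i · (v_{k-1}^I)^T G_i v_{k-1}^I holds in ℝ[x]. -/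
open MvPolynomial

/-- The finite set `ℕ^I_d` of multi-indices `α` with `|α| ≤ d` supported on `I`. -/
noncomputable def degLEI (n : ℕ) (I : Finset (Fin n)) (d : ℕ) : Finset (Fin n →₀ ℕ) :=
  (degLE n d).filter fun α => α.support ⊆ I

/-- The polynomial `(v_d^I)^T G v_d^I = Σ_{α,β ∈ ℕ^I_d} G_{α,β} x^{α+β}`. -/
noncomputable def quadFormI (n : ℕ) (I : Finset (Fin n)) (d : ℕ)
    (G : Matrix ↥(degLEI n I d) ↥(degLEI n I d) ℝ) : MvPolynomial (Fin n) ℝ :=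
  ∑ α : ↥(degLEI n I d), ∑ β : ↥(degLEI n I d), monomial (α.1 + β.1) (G α β)

lemma mem_degLEI_iff {n : ℕ} {I : Finset (Fin n)} {d : ℕ} {α : Fin n →₀ ℕ} :
    α ∈ degLEI n I d ↔ (∑ i, α i) ≤ d ∧ α.support ⊆ I := by
  unfold degLEI degLE
  simp only [Finset.mem_filter, Finset.mem_Iic]
  constructor
  · rintro ⟨⟨_, h⟩, h'⟩
    exact ⟨h, h'⟩
  · rintro ⟨h, h'⟩
    refine ⟨⟨?_, h⟩, h'⟩
    intro i
    simp only [Finsupp.equivFunOnFinite_symm_apply_apply]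
    exact le_trans (Finset.single_le_sum (f := fun i => α i) (fun _ _ => Nat.zero_le _)
      (Finset.mem_univ i)) h

lemma quadFormI_diag (n : ℕ) (I : Finset (Fin n)) (d : ℕ) (f : (Fin n →₀ ℕ) → ℝ) :
    quadFormI n I d (Matrix.diagonal fun α => f α.1)
      = ∑ α ∈ degLEI n I d, monomial (α + α) (f α) := by
  unfold quadFormI
  rw [← Finset.sum_coe_sort (degLEI n I d)]
  refine Finset.sum_congr rfl fun α _ => ?_
  rw [Finset.sum_eq_single α]
  · simp
  · intro β _ h
    simp [Matrix.diagonal_apply_ne _ h.symm]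
  · simp

lemma DiagGE1_diagonal {κ : Type*} [DecidableEq κ] (f : κ → ℝ) (hf : ∀ a, 1 ≤ f a) :
    DiagGE1 (Matrix.diagonal f) := by
  refine ⟨fun a b h => Matrix.diagonal_apply_ne _ h, fun a => ?_⟩
  simpa using hf a

lemma shift_sum (n : ℕ) (I : Finset (Fin n)) (K : ℕ) (w : ℕ → ℝ) (v : Fin n) (hv : v ∈ I) :
    (X v ^ 2 : MvPolynomial (Fin n) ℝ) *
        (∑ α ∈ degLEI n I K, monomial (α + α) (w (∑ i, α i)))
      = ∑ α ∈ degLEI n I (K + 1),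
          monomial (α + α) (if 1 ≤ α v then w ((∑ i, α i) - 1) else 0) := by
  have h1 : ∀ α : Fin n →₀ ℕ,
      (monomial (α + α) (if 1 ≤ α v then w ((∑ i, α i) - 1) else 0) : MvPolynomial (Fin n) ℝ)
        = if 1 ≤ α v then monomial (α + α) (w ((∑ i, α i) - 1)) else 0 := by
    intro α
    split_ifs <;> simp
  simp only [h1]
  rw [← Finset.sum_filter, Finset.mul_sum]
  have hs : ∀ α : Fin n →₀ ℕ, (∑ i, (α + Finsupp.single v 1 : Fin n →₀ ℕ) i) = (∑ i, α i) + 1 := by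
    intro α
    simp [Finset.sum_add_distrib, Finsupp.single_apply]
  refine Finset.sum_bij' (fun α _ => α + Finsupp.single v 1)
    (fun α _ => α - Finsupp.single v 1) ?_ ?_ ?_ ?_ ?_
  · intro α hα
    rw [mem_degLEI_iff] at hα
    rw [Finset.mem_filter, mem_degLEI_iff, hs]
    refine ⟨⟨by omega, ?_⟩, by simp⟩
    intro j hj
    by_cases hjv : j = v
    · exact hjv ▸ hv
    · apply hα.2
      simpa [Finsupp.single_apply, Ne.symm hjv] using hj
  · intro α hα
    rw [Finset.mem_filter, mem_degLEI_iff] at hα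
    have he : α - Finsupp.single v 1 + Finsupp.single v 1 = α :=
      tsub_add_cancel_of_le (by simpa using hα.2)
    have := hs (α - Finsupp.single v 1)
    rw [he] at this
    rw [mem_degLEI_iff]
    refine ⟨by omega, ?_⟩
    intro j hj
    apply hα.1.2
    rw [Finsupp.mem_support_iff] at hj ⊢
    rw [Finsupp.tsub_apply] at hj
    omega
  · intro α _
    simp
  · intro α hα
    rw [Finset.mem_filter] at hα
    exact tsub_add_cancel_of_le (by simpa using hα.2)
  · intro α _
    rw [hs, X_pow_eq_monomial, monomial_mul]
    have hx : Finsupp.single v 2 + (α + α)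
        = (α + Finsupp.single v 1) + (α + Finsupp.single v 1) := by
      ext j
      simp only [Finsupp.add_apply, Finsupp.single_apply]
      split_ifs <;> omega
    rw [hx, one_mul, Nat.add_sub_cancel]

lemma exists_weights (K : ℕ) (D S : ℝ) (hD : 0 ≤ D) (hS : 0 ≤ S) :
    ∃ w : ℕ → ℝ, (∀ j, 1 ≤ w j) ∧ ∀ j, j < K → S * w (j + 1) + D + 1 ≤ w j := by
  let e : ℕ → ℝ := fun i => Nat.rec 1 (fun _ x => S * x + D + 1) i
  have he : ∀ i, e (i + 1) = S * e i + D + 1 := fun i => rfl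
  have h1 : ∀ i, 1 ≤ e i := by
    intro i
    induction i with
    | zero => exact le_refl _
    | succ i ih =>
      rw [he]
      have : 0 ≤ S * e i := mul_nonneg hS (by linarith)
      linarith
  refine ⟨fun j => e (K - j), fun j => h1 _, fun j hj => ?_⟩
  have : K - j = (K - (j + 1)) + 1 := by omega
  simp only
  rw [this, he]

/-- Clique version of Statement 6: the index set `J` is partitioned into
annulus pairs (`q ∈ A`, paired with `pair q`) and balls (`q ∈ B`), with
`g_q = ‖x(T_q)‖₂² − R̲_q`, `g_{pair q} = R̄_q − ‖x(T_q)‖₂²` for `q ∈ A` and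
`g_q = R̄_q − ‖x(T_q)‖₂²` for `q ∈ B`, the sets `T_q ⊆ I` covering `I`.  Then for every
`k ≥ 1` there exist `ξ > 0` and diagonal matrices `G_0` (indexed by `ℕ^I_k`) and `G_i`
(indexed by `ℕ^I_{k-1}`, `i ∈ J`), all with diagonal entries ≥ 1, such that
`ξ = (v_k^I)^T G_0 v_k^I + Σ_{i∈J} g_i (v_{k-1}^I)^T G_i v_{k-1}^I`. -/
theorem stmt13 (n : ℕ) {ι : Type} [DecidableEq ι] (I : Finset (Fin n))
    (J A B : Finset ι) (pair : ι → ι)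
    (T : ι → Finset (Fin n)) (Rlo Rhi : ι → ℝ)
    (g : ι → MvPolynomial (Fin n) ℝ)
    (hpart : J = A ∪ A.image pair ∪ B)
    (hdisj1 : Disjoint A (A.image pair))
    (hdisj2 : Disjoint (A ∪ A.image pair) B)
    (hinj : Set.InjOn pair ↑A)
    (hA : ∀ q ∈ A, T q ⊆ I ∧ 0 < Rlo q ∧ Rlo q < Rhi q ∧
      g q = (∑ v ∈ T q, X v ^ 2) - C (Rlo q) ∧
      g (pair q) = C (Rhi q) - ∑ v ∈ T q, X v ^ 2)
    (hB : ∀ q ∈ B, T q ⊆ I ∧ 0 < Rhi q ∧ g q = C (Rhi q) - ∑ v ∈ T q, X v ^ 2)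
    (hcov : (A.biUnion T) ∪ (B.biUnion T) = I) :
    ∀ k : ℕ, 1 ≤ k →
      ∃ ξ : ℝ, 0 < ξ ∧
      ∃ G0 : Matrix ↥(degLEI n I k) ↥(degLEI n I k) ℝ, DiagGE1 G0 ∧
      ∃ G : ι → Matrix ↥(degLEI n I (k - 1)) ↥(degLEI n I (k - 1)) ℝ,
        (∀ i ∈ J, DiagGE1 (G i)) ∧
        (C ξ : MvPolynomial (Fin n) ℝ)
          = quadFormI n I k G0 + ∑ i ∈ J, g i * quadFormI n I (k - 1) (G i) := by
  intro k hk
  obtain ⟨K, rfl⟩ : ∃ K, k = K + 1 := ⟨k - 1, by omega⟩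
  have hAB : Disjoint A B := Finset.disjoint_of_subset_left Finset.subset_union_left hdisj2
  have hPB : Disjoint (A.image pair) B :=
    Finset.disjoint_of_subset_left Finset.subset_union_right hdisj2
  set D : ℝ := ∑ q ∈ A, (Rhi q - Rlo q) with hDdef
  set S : ℝ := ∑ q ∈ A ∪ B, Rhi q with hSdef
  have hD : 0 ≤ D := Finset.sum_nonneg fun q hq => by
    have := hA q hq
    linarith [this.2.2.1]
  have hS : 0 ≤ S := Finset.sum_nonneg fun q hq => by
    rcases Finset.mem_union.1 hq with h | h
    · have := hA q h
      linarith [this.2.2.1, this.2.1]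
    · exact (hB q h).2.1.le
  have hT : ∀ q ∈ A ∪ B, T q ⊆ I := fun q hq => by
    rcases Finset.mem_union.1 hq with h | h
    · exact (hA q h).1
    · exact (hB q h).1
  obtain ⟨w, hw1, hw⟩ := exists_weights K D S hD hS
  let dg : (Fin n →₀ ℕ) → ℕ := fun α => ∑ i, α i
  let a : (Fin n →₀ ℕ) → ℝ := fun α =>
    (if α = 0 then 1 + D + S * w 0 else 0)
      - (if dg α ≤ K then D + S * w (dg α) else 0)
      + ∑ q ∈ A ∪ B, ∑ v ∈ T q, (if 1 ≤ α v then w (dg α - 1) else 0)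
  have ha : ∀ α ∈ degLEI n I (K + 1), 1 ≤ a α := by
    intro α hα
    rw [mem_degLEI_iff] at hα
    by_cases h0 : α = 0
    · subst h0
      simp [a, dg]
    · obtain ⟨v, hv⟩ := Finsupp.support_nonempty_iff.2 h0
      have hvI := hα.2 hv
      have hv1 : 1 ≤ α v := Nat.one_le_iff_ne_zero.2 (Finsupp.mem_support_iff.1 hv)
      have hdg : 1 ≤ dg α := le_trans hv1 (Finset.single_le_sum (f := fun i => α i)
        (fun _ _ => Nat.zero_le _) (Finset.mem_univ v))
      have hα1 : dg α ≤ K + 1 := hα.1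
      rw [← hcov, ← Finset.union_biUnion, Finset.mem_biUnion] at hvI
      obtain ⟨q, hq, hvq⟩ := hvI
      have hnn : ∀ u : Fin n, (0 : ℝ) ≤ if 1 ≤ α u then w (dg α - 1) else 0 := by
        intro u
        have := hw1 (dg α - 1)
        split_ifs <;> linarith
      have hge : w (dg α - 1) ≤
          ∑ q ∈ A ∪ B, ∑ v ∈ T q, (if 1 ≤ α v then w (dg α - 1) else 0) := by
        calc w (dg α - 1) = (if 1 ≤ α v then w (dg α - 1) else 0) := by rw [if_pos hv1]
          _ ≤ ∑ v ∈ T q, (if 1 ≤ α v then w (dg α - 1) else 0) :=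
            Finset.single_le_sum (f := fun v => if 1 ≤ α v then w (dg α - 1) else 0)
              (fun u _ => hnn u) hvq
          _ ≤ _ := Finset.single_le_sum
              (f := fun q => ∑ v ∈ T q, (if 1 ≤ α v then w (dg α - 1) else 0))
              (fun q _ => Finset.sum_nonneg fun u _ => hnn u) hq
      simp only [a, if_neg h0]
      by_cases hK : dg α ≤ K
      · rw [if_pos hK]
        have h2 := hw (dg α - 1) (by omega)
        rw [Nat.sub_add_cancel hdg] at h2
        linarith
      · rw [if_neg hK]
        have := hw1 (dg α - 1)
        linarith
  let Q : (ℕ → ℝ) → MvPolynomial (Fin n) ℝ := fun f =>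
    ∑ α ∈ degLEI n I K, monomial (α + α) (f (dg α))
  let G : ι → Matrix ↥(degLEI n I K) ↥(degLEI n I K) ℝ := fun i =>
    if i ∈ A then Matrix.diagonal fun _ => 1
    else if i ∈ B then Matrix.diagonal fun α => w (dg α.1)
    else Matrix.diagonal fun α => 1 + w (dg α.1)
  have hQA : ∀ q ∈ A, quadFormI n I K (G q) = Q fun _ => 1 := by
    intro q hq
    simp only [G, if_pos hq]
    exact quadFormI_diag n I K fun _ => 1
  have hQB : ∀ q ∈ B, quadFormI n I K (G q) = Q w := by
    intro q hq
    simp only [G, if_neg (Finset.disjoint_right.1 hAB hq), if_pos hq]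
    exact quadFormI_diag n I K fun α => w (dg α)
  have hQP : ∀ q ∈ A, quadFormI n I K (G (pair q)) = Q (fun _ => 1) + Q w := by
    intro q hq
    have hp := Finset.mem_image_of_mem pair hq
    simp only [G, if_neg (Finset.disjoint_right.1 hdisj1 hp),
      if_neg (Finset.disjoint_left.1 hPB hp)]
    rw [quadFormI_diag n I K fun α => 1 + w (dg α)]
    simp only [Q, ← Finset.sum_add_distrib, map_add]
  have hP : ∑ i ∈ J, g i * quadFormI n I K (G i)
      = C D * Q (fun _ => 1) + C S * Q w - ∑ q ∈ A ∪ B, ∑ v ∈ T q, X v ^ 2 * Q w := by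
    rw [hpart, Finset.sum_union hdisj2, Finset.sum_union hdisj1, Finset.sum_image hinj,
      ← Finset.sum_add_distrib, hDdef, hSdef, Finset.sum_union hAB, Finset.sum_union hAB]
    have e1 : ∑ q ∈ A, (g q * quadFormI n I K (G q)
        + g (pair q) * quadFormI n I K (G (pair q)))
        = ∑ q ∈ A, (C (Rhi q - Rlo q) * Q (fun _ => 1)
          + (C (Rhi q) * Q w - ∑ v ∈ T q, X v ^ 2 * Q w)) := by
      refine Finset.sum_congr rfl fun q hq => ?_
      rw [hQA q hq, hQP q hq, (hA q hq).2.2.2.1, (hA q hq).2.2.2.2, ← Finset.sum_mul, map_sub]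
      ring
    have e2 : ∑ q ∈ B, g q * quadFormI n I K (G q)
        = ∑ q ∈ B, (C (Rhi q) * Q w - ∑ v ∈ T q, X v ^ 2 * Q w) := by
      refine Finset.sum_congr rfl fun q hq => ?_
      rw [hQB q hq, (hB q hq).2.2, ← Finset.sum_mul]
      ring
    rw [e1, e2]
    simp only [Finset.sum_add_distrib, Finset.sum_sub_distrib, map_add, map_sum, map_sub, ← Finset.sum_mul]
    ring
  have hL : ∀ f : ℕ → ℝ, Q f = ∑ α ∈ degLEI n I (K + 1),
      monomial (α + α) (if dg α ≤ K then f (dg α) else 0) := by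
    intro f
    have h1 : ∀ α : Fin n →₀ ℕ,
        (monomial (α + α) (if dg α ≤ K then f (dg α) else 0) : MvPolynomial (Fin n) ℝ)
          = if dg α ≤ K then monomial (α + α) (f (dg α)) else 0 := by
      intro α
      split_ifs <;> simp
    simp only [h1]
    rw [← Finset.sum_filter]
    refine Finset.sum_congr ?_ fun _ _ => rfl
    ext α
    rw [Finset.mem_filter, mem_degLEI_iff, mem_degLEI_iff]
    constructor
    · rintro ⟨h, h'⟩
      exact ⟨⟨by omega, h'⟩, h⟩
    · rintro ⟨⟨_, h'⟩, h⟩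
      exact ⟨h, h'⟩
  refine ⟨1 + D + S * w 0, ?_, Matrix.diagonal fun α => a α.1,
    DiagGE1_diagonal _ fun α => ha α.1 α.2, G, ?_, ?_⟩
  · have := mul_nonneg hS (le_trans zero_le_one (hw1 0))
    linarith
  · intro i _
    change DiagGE1 (G i)
    simp only [G]
    split_ifs
    · exact DiagGE1_diagonal _ fun _ => le_refl _
    · exact DiagGE1_diagonal _ fun α => hw1 _
    · exact DiagGE1_diagonal _ fun α => by linarith [hw1 (dg α.1)]
  · change _ = _ + ∑ i ∈ J, g i * quadFormI n I K (G i)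
    rw [hP, quadFormI_diag]
    have h0 : (C (1 + D + S * w 0) : MvPolynomial (Fin n) ℝ)
        = ∑ α ∈ degLEI n I (K + 1),
          monomial (α + α) (if α = 0 then 1 + D + S * w 0 else 0) := by
      rw [Finset.sum_eq_single 0]
      · simp
      · intro α _ h
        simp [h]
      · intro h
        exact absurd (mem_degLEI_iff.2 (by simp)) h
    have h3 : ∑ q ∈ A ∪ B, ∑ v ∈ T q, X v ^ 2 * Q w
        = ∑ α ∈ degLEI n I (K + 1), monomial (α + α)
          (∑ q ∈ A ∪ B, ∑ v ∈ T q, (if 1 ≤ α v then w (dg α - 1) else 0)) := by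
      simp only [map_sum]
      rw [Finset.sum_comm]
      refine Finset.sum_congr rfl fun q hq => ?_
      rw [Finset.sum_comm]
      refine Finset.sum_congr rfl fun v hv => ?_
      exact shift_sum n I K w v (hT q hq hv)
    have h4 : C D * Q (fun _ => 1) + C S * Q w
        = ∑ α ∈ degLEI n I (K + 1), monomial (α + α)
          (if dg α ≤ K then D + S * w (dg α) else 0) := by
      rw [← hL fun j => D + S * w j]
      simp only [Q, Finset.mul_sum, C_mul_monomial, mul_one, map_add, Finset.sum_add_distrib]
    rw [h0, h3, h4, ← Finset.sum_sub_distrib, ← Finset.sum_add_distrib]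
    refine Finset.sum_congr rfl fun α _ => ?_
    simp only [a, map_add, map_sub]
    ring
end
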